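/- arXiv:2201.01485 — 5 statements merged into one kernel-verified Lean document; each statement's English description precedes it below -/
import Mathlib

section
/- Let E be the Euclidean space ℝ^d (d ≥ 1), let y ∈ E and θ > 0, and define F : E → ℝ by F(z) = (1/2)·‖y − z‖² + θ·‖z‖. Define η(y) = (1 − θ/‖y‖)·y if ‖y‖ ≥ θ and η(y) = 0 if ‖y‖ < θ. Then η(y) is the unique global minimizer of F: for every z ∈ E with z ≠ η(y), one has F(η(y)) < F(z). -/
/-!
If `v = y - x` is a subgradient of `g` at `x`, then expanding `‖y - z‖²` around `x` shows that
`z ↦ ‖y - z‖² / 2 + g z` exceeds its value at `x` by at least `‖z - x‖² / 2`. For `g = θ‖·‖` the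
vector `v` is a subgradient at `x` as soon as `‖v‖ ≤ θ` and `⟪v, x⟫ = θ‖x‖`; the residual of block
soft-thresholding is `y` cut down to norm at most `θ`, and it has both properties.
-/

section BlockSoftThreshold

open scoped InnerProductSpace

variable {E : Type*} [NormedAddCommGroup E] [InnerProductSpace ℝ E] {g : E → ℝ} {v x y : E} {θ : ℝ}

/-- `v` is a subgradient of `g` at `x`, in the sense of convex analysis: the affine function with
slope `v` that agrees with `g` at `x` lies below `g` everywhere. Here `v` is a vector of `E`
rather than a continuous linear functional. -/
def IsSubgradient (g : E → ℝ) (v x : E) : Prop :=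
  ∀ z, g x + ⟪v, z - x⟫_ℝ ≤ g z

theorem IsSubgradient.add_half_sq_norm_sub_le (h : IsSubgradient g (y - x) x) (z : E) :
    1 / 2 * ‖y - x‖ ^ 2 + g x + 1 / 2 * ‖z - x‖ ^ 2 ≤ 1 / 2 * ‖y - z‖ ^ 2 + g z := by
  have expansion : ‖y - z‖ ^ 2 = ‖y - x‖ ^ 2 - 2 * ⟪y - x, z - x⟫_ℝ + ‖z - x‖ ^ 2 := by
    rw [← norm_sub_sq_real, sub_sub_sub_cancel_right]
  linarith [h z]

theorem IsSubgradient.half_sq_norm_sub_add_lt (h : IsSubgradient g (y - x) x) {z : E}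
    (hz : z ≠ x) :
    1 / 2 * ‖y - x‖ ^ 2 + g x < 1 / 2 * ‖y - z‖ ^ 2 + g z := by
  have hpos : 0 < ‖z - x‖ := norm_sub_pos_iff.mpr hz
  exact (lt_add_of_pos_right _ (by positivity)).trans_le (h.add_half_sq_norm_sub_le z)

theorem isSubgradient_mul_norm (hv : ‖v‖ ≤ θ) (hvx : ⟪v, x⟫_ℝ = θ * ‖x‖) :
    IsSubgradient (fun z ↦ θ * ‖z‖) v x := fun z ↦
  calc
    θ * ‖x‖ + ⟪v, z - x⟫_ℝ = ⟪v, z⟫_ℝ := by rw [inner_sub_right, hvx, add_sub_cancel]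
    _ ≤ ‖v‖ * ‖z‖ := real_inner_le_norm v z
    _ ≤ θ * ‖z‖ := by gcongr

/-- The block soft-thresholding operator at level `θ`: it shortens `y` by `θ`, and sends vectors of
norm less than `θ` to `0`. For `θ = 0` and `y = 0` the quotient `θ / ‖y‖` is `0 / 0`, but it only
scales the zero vector. -/
noncomputable def blockSoftThreshold (θ : ℝ) (y : E) : E :=
  if θ ≤ ‖y‖ then (1 - θ / ‖y‖) • y else 0

theorem blockSoftThreshold_of_le (h : θ ≤ ‖y‖) :
    blockSoftThreshold θ y = (1 - θ / ‖y‖) • y :=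
  if_pos h

theorem blockSoftThreshold_of_lt (h : ‖y‖ < θ) : blockSoftThreshold θ y = 0 :=
  if_neg h.not_ge

theorem sub_blockSoftThreshold_of_le (h : θ ≤ ‖y‖) :
    y - blockSoftThreshold θ y = (θ / ‖y‖) • y := by
  rw [blockSoftThreshold_of_le h]
  module

theorem norm_sub_blockSoftThreshold_le (hθ : 0 ≤ θ) (y : E) :
    ‖y - blockSoftThreshold θ y‖ ≤ θ := by
  rcases le_or_gt θ ‖y‖ with h | h
  · rw [sub_blockSoftThreshold_of_le h, norm_smul, Real.norm_of_nonneg (by positivity)]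
    exact mul_le_of_le_div₀ hθ (norm_nonneg y) le_rfl
  · rw [blockSoftThreshold_of_lt h, sub_zero]
    exact h.le

theorem inner_sub_blockSoftThreshold_self (θ : ℝ) (y : E) :
    ⟪y - blockSoftThreshold θ y, blockSoftThreshold θ y⟫_ℝ = θ * ‖blockSoftThreshold θ y‖ := by
  rcases le_or_gt θ ‖y‖ with h | h
  · have scale_nonneg : 0 ≤ 1 - θ / ‖y‖ :=
      sub_nonneg.mpr (div_le_one_of_le₀ h (norm_nonneg y))
    rw [sub_blockSoftThreshold_of_le h, blockSoftThreshold_of_le h, real_inner_smul_left,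
      real_inner_smul_right, real_inner_self_eq_norm_sq, norm_smul,
      Real.norm_of_nonneg scale_nonneg]
    field_simp
  · rw [blockSoftThreshold_of_lt h, inner_zero_right, norm_zero, mul_zero]

theorem isSubgradient_sub_blockSoftThreshold (hθ : 0 ≤ θ) (y : E) :
    IsSubgradient (fun z ↦ θ * ‖z‖) (y - blockSoftThreshold θ y) (blockSoftThreshold θ y) :=
  isSubgradient_mul_norm (norm_sub_blockSoftThreshold_le hθ y)
    (inner_sub_blockSoftThreshold_self θ y)

theorem blockSoftThresholding_unique_min_general (hθ : 0 ≤ θ) (y : E) {z : E}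
    (hz : z ≠ blockSoftThreshold θ y) :
    1 / 2 * ‖y - blockSoftThreshold θ y‖ ^ 2 + θ * ‖blockSoftThreshold θ y‖ <
      1 / 2 * ‖y - z‖ ^ 2 + θ * ‖z‖ :=
  (isSubgradient_sub_blockSoftThreshold hθ y).half_sq_norm_sub_add_lt hz

end BlockSoftThreshold

/-- Block soft-thresholding is the unique global minimizer of the group-LASSO objective
`F z = (1/2)·‖y − z‖² + θ·‖z‖` on Euclidean space `ℝ^d`. -/
theorem blockSoftThresholding_unique_min
    (d : ℕ) (hd : 1 ≤ d) (y : EuclideanSpace ℝ (Fin d)) (θ : ℝ) (hθ : 0 < θ)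
    (F : EuclideanSpace ℝ (Fin d) → ℝ)
    (hF : ∀ z, F z = (1 / 2) * ‖y - z‖ ^ 2 + θ * ‖z‖)
    (η : EuclideanSpace ℝ (Fin d))
    (hη : η = if θ ≤ ‖y‖ then (1 - θ / ‖y‖) • y else 0) :
    ∀ z, z ≠ η → F η < F z := by
  obtain rfl : η = blockSoftThreshold θ y := hη
  simpa only [hF] using fun z hz ↦ blockSoftThresholding_unique_min_general hθ.le y hz
end

section
/- Fix an integer M ≥ 1 and a real τ > 0, and define ξ(θ) = (θ·Γ̄(M, (θ/τ)²) − τ·Γ̄(M + 1/2, (θ/τ)²)) / Γ(M) and ϖ(θ) = (θ²·Γ̄(M, (θ/τ)²) − 2θτ·Γ̄(M + 1/2, (θ/τ)²) + τ²·Γ̄(M + 1, (θ/τ)²)) / Γ(M) for θ ≥ 0. Then for every θ > 0, ϖ is differentiable at θ with derivative ϖ'(θ) = 2·ξ(θ). -/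
/-- The upper incomplete gamma function `Γ̄(s, x) = ∫_x^∞ t^{s-1} e^{-t} dt`. -/
noncomputable def uGamma (s x : ℝ) : ℝ := ∫ t in Set.Ioi x, t ^ (s - 1) * Real.exp (-t)

/-!
With `x = (θ / τ) ^ 2`, the numerator of `ϖ θ` is `∫_x^∞ (θ - τ√t)² t^{s-1} e^{-t} dt` at `s = M`.
By the Leibniz rule its derivative is the integral of `2 (θ - τ√t) t^{s-1} e^{-t}`, which is twice
the numerator of `ξ θ`, plus a boundary term proportional to `(θ - τ√x)²`. The latter vanishes
because `√x = θ / τ`.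
-/

open Set MeasureTheory

theorem hasDerivAt_integral_Ioi {E : Type*} [NormedAddCommGroup E] [NormedSpace ℝ E]
    [CompleteSpace E] {f : ℝ → E} {a x : ℝ} (hf : IntegrableOn f (Ioi a)) (hax : a < x)
    (hx : ContinuousAt f x) : HasDerivAt (fun u => ∫ t in Ioi u, f t) (-f x) x := by
  have hmeas : StronglyMeasurableAtFilter f (nhds x) :=
    ⟨Ioi a, Ioi_mem_nhds hax, hf.aestronglyMeasurable⟩
  have hint : IntervalIntegrable f volume a x :=
    (intervalIntegrable_iff_integrableOn_Ioc_of_le hax.le).2 (hf.mono_set Ioc_subset_Ioi_self)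
  have hderiv := (intervalIntegral.integral_hasDerivAt_right hint hmeas hx).const_sub
    (∫ t in Ioi a, f t)
  refine hderiv.congr_of_eventuallyEq ?_
  filter_upwards [Ioi_mem_nhds hax] with u hau
  rw [← intervalIntegral.integral_Ioi_sub_Ioi hf (mem_Ioi.1 hau).le, sub_sub_cancel]

theorem continuousAt_rpow_mul_exp_neg (p : ℝ) {x : ℝ} (hx : x ≠ 0) :
    ContinuousAt (fun t : ℝ => t ^ p * Real.exp (-t)) x :=
  (Real.continuousAt_rpow_const x p (Or.inl hx)).mul continuousAt_neg.rexp

theorem integrableOn_Ioi_rpow_mul_exp_neg (p : ℝ) {a : ℝ} (ha : 0 < a) :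
    IntegrableOn (fun t : ℝ => t ^ p * Real.exp (-t)) (Ioi a) := by
  refine integrable_of_isBigO_exp_neg one_half_pos
    (fun t ht => (continuousAt_rpow_mul_exp_neg p (ha.trans_le ht).ne').continuousWithinAt) ?_
  simpa only [mul_comm] using (Real.Gamma_integrand_isLittleO p).isBigO

theorem hasDerivAt_uGamma (s : ℝ) {x : ℝ} (hx : 0 < x) :
    HasDerivAt (uGamma s) (-(x ^ (s - 1) * Real.exp (-x))) x :=
  hasDerivAt_integral_Ioi (integrableOn_Ioi_rpow_mul_exp_neg (s - 1) (half_pos hx))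
    (half_lt_self hx) (continuousAt_rpow_mul_exp_neg (s - 1) hx.ne')

theorem hasDerivAt_uGamma_quadratic_comp (s τ : ℝ) {q : ℝ → ℝ} {q' θ : ℝ}
    (hq : HasDerivAt q q' θ) (hpos : 0 < q θ) :
    HasDerivAt
      (fun θ => θ ^ 2 * uGamma s (q θ) - 2 * θ * τ * uGamma (s + 1 / 2) (q θ)
        + τ ^ 2 * uGamma (s + 1) (q θ))
      (2 * (θ * uGamma s (q θ) - τ * uGamma (s + 1 / 2) (q θ))
        - (θ - τ * √(q θ)) ^ 2 * (q θ ^ (s - 1) * Real.exp (-q θ)) * q') θ := by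
  have hG (p : ℝ) : HasDerivAt (fun θ => uGamma p (q θ))
      (-(q θ ^ (p - 1) * Real.exp (-q θ)) * q') θ :=
    (hasDerivAt_uGamma p hpos).comp θ hq
  have hhalf : q θ ^ (s + 1 / 2 - 1) = q θ ^ (s - 1) * √(q θ) := by
    rw [Real.sqrt_eq_rpow, ← Real.rpow_add hpos, sub_add_eq_add_sub]
  have hone : q θ ^ (s + 1 - 1) = q θ ^ (s - 1) * √(q θ) ^ 2 := by
    rw [Real.sq_sqrt hpos.le, ← Real.rpow_add_one hpos.ne', sub_add_eq_add_sub]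
  have hsq : HasDerivAt (fun θ : ℝ => θ ^ 2) (2 * θ) θ := by
    simpa using hasDerivAt_pow 2 θ
  have hlin : HasDerivAt (fun θ : ℝ => 2 * θ * τ) (2 * τ) θ := by
    simpa using ((hasDerivAt_id θ).const_mul 2).mul_const τ
  refine (((hsq.mul (hG s)).sub (hlin.mul (hG (s + 1 / 2)))).add
    ((hG (s + 1)).const_mul (τ ^ 2))).congr_deriv ?_
  rw [hhalf, hone]
  ring

/- The numerators are compared without the factor `1 / Γ(s)`, which is junk at the poles of `Γ`. -/
theorem varpi_hasDerivAt_general (s : ℝ) {τ θ : ℝ} (h : 0 < θ / τ) :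
    HasDerivAt
      (fun θ => θ ^ 2 * uGamma s ((θ / τ) ^ 2)
        - 2 * θ * τ * uGamma (s + 1 / 2) ((θ / τ) ^ 2)
        + τ ^ 2 * uGamma (s + 1) ((θ / τ) ^ 2))
      (2 * (θ * uGamma s ((θ / τ) ^ 2) - τ * uGamma (s + 1 / 2) ((θ / τ) ^ 2))) θ := by
  have hτ : τ ≠ 0 := (div_ne_zero_iff.1 h.ne').2
  have hq : DifferentiableAt ℝ (fun θ => (θ / τ) ^ 2) θ := by fun_prop
  have hboundary : θ - τ * √((θ / τ) ^ 2) = 0 := by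
    rw [Real.sqrt_sq h.le, mul_div_cancel₀ θ hτ, sub_self]
  simpa [hboundary] using hasDerivAt_uGamma_quadratic_comp s τ hq.hasDerivAt (pow_pos h 2)

/-- For `M ≥ 1` and `τ > 0`, the worst-case MSE contribution
`ϖ(θ) = (θ²·Γ̄(M,(θ/τ)²) − 2θτ·Γ̄(M+1/2,(θ/τ)²) + τ²·Γ̄(M+1,(θ/τ)²)) / Γ(M)`
is differentiable at every `θ > 0` with derivative `2·ξ(θ)`, where
`ξ(θ) = (θ·Γ̄(M,(θ/τ)²) − τ·Γ̄(M+1/2,(θ/τ)²)) / Γ(M)`. -/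
theorem varpi_hasDerivAt
    (M : ℕ) (hM : 1 ≤ M) (τ : ℝ) (hτ : 0 < τ) (ξ ϖ : ℝ → ℝ)
    (hξ : ∀ θ, ξ θ = (θ * uGamma M ((θ / τ) ^ 2) - τ * uGamma (M + 1 / 2) ((θ / τ) ^ 2))
      / Real.Gamma M)
    (hϖ : ∀ θ, ϖ θ = (θ ^ 2 * uGamma M ((θ / τ) ^ 2)
      - 2 * θ * τ * uGamma (M + 1 / 2) ((θ / τ) ^ 2)
      + τ ^ 2 * uGamma (M + 1) ((θ / τ) ^ 2)) / Real.Gamma M) :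
    ∀ θ > 0, HasDerivAt ϖ (2 * ξ θ) θ := by
  intro θ hθ
  rw [funext hϖ, hξ, ← mul_div_assoc]
  exact (varpi_hasDerivAt_general M (div_pos hθ hτ)).div_const (Real.Gamma M)
end

section
/- Fix an integer M ≥ 1, a real τ > 0, and constants c₁ > 0 and c₂ > 0. Define ξ(θ) = (θ·Γ̄(M, (θ/τ)²) − τ·Γ̄(M + 1/2, (θ/τ)²)) / Γ(M) and f(θ) = c₁·ξ(θ) + c₂·θ for θ ≥ 0. Then there exists a unique θ* > 0 such that f(θ*) = 0. -/
/-!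
Under the gamma law `ν` of shape `s` and rate `1`, `-ξ θ` is the mean excess
`∫ max (τ √t - θ) 0 ∂ν(t)` of `τ √t` over the level `θ`: the excess lives on `t > (θ / τ) ^ 2`,
and there it splits into the two incomplete gamma functions. A mean excess is continuous and
decreasing in the level, and at level `0` it is positive, so `f θ = 0`, i.e.
`(c₁ / c₂) * (-ξ θ) = θ`, is a fixed-point equation for a decreasing continuous function with
positive value at `0`.
-/

open MeasureTheory ProbabilityTheory Set

theorem existsUnique_pos_fixedPoint_of_antitoneOn {g : ℝ → ℝ} (hanti : AntitoneOn g (Ici 0))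
    (hcont : ContinuousOn g (Ici 0)) (hpos : 0 < g 0) : ∃! x, 0 < x ∧ g x = x := by
  have hsub_cont : ContinuousOn (fun x ↦ x - g x) (Icc 0 (g 0)) :=
    continuousOn_id.sub (hcont.mono Icc_subset_Ici_self)
  have hsub_strictMono : StrictMonoOn (fun x ↦ x - g x) (Ici 0) := fun x hx y hy hxy ↦
    by linarith [hanti hx hy hxy.le]
  have hright : 0 ≤ g 0 - g (g 0) := sub_nonneg.2 (hanti self_mem_Ici hpos.le hpos.le)
  obtain ⟨x, hx, hroot⟩ := intermediate_value_Icc hpos.le hsub_cont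
    ⟨by simpa only [zero_sub, neg_nonpos] using hpos.le, hright⟩
  have hfix : g x = x := (sub_eq_zero.1 hroot).symm
  have hx_ne : x ≠ 0 := fun h ↦ hpos.ne' (h ▸ hfix)
  refine ⟨x, ⟨hx.1.lt_of_ne' hx_ne, hfix⟩, fun y ⟨hy, hfix'⟩ ↦ ?_⟩
  exact hsub_strictMono.injOn hy.le hx.1 ((sub_eq_zero.2 hfix'.symm).trans hroot.symm)

section StopLoss

variable {Ω : Type*} [MeasurableSpace Ω] {μ : Measure Ω} {X : Ω → ℝ}

/-- The stop-loss transform of `X` under `μ`: the mean excess of `X` over the level `θ`. -/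
noncomputable def stopLoss (μ : Measure Ω) (X : Ω → ℝ) (θ : ℝ) : ℝ :=
  ∫ ω, max (X ω - θ) 0 ∂μ

theorem stopLoss_eq_setIntegral (hX : AEMeasurable X μ) (θ : ℝ) :
    stopLoss μ X θ = ∫ ω in {ω | θ < X ω}, (X ω - θ) ∂μ := by
  rw [stopLoss, ← integral_indicator₀ (nullMeasurableSet_lt aemeasurable_const hX)]
  congr 1 with ω
  by_cases h : ω ∈ {ω | θ < X ω}
  · rw [indicator_of_mem h, max_eq_left (sub_nonneg.2 (le_of_lt h))]
  · rw [indicator_of_notMem h, max_eq_right (sub_nonpos.2 (not_lt.1 h))]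

variable [IsFiniteMeasure μ]

theorem integrable_max_sub_zero (hX : Integrable X μ) (θ : ℝ) :
    Integrable (fun ω ↦ max (X ω - θ) 0) μ :=
  (hX.sub (integrable_const θ)).pos_part

theorem antitone_stopLoss (hX : Integrable X μ) : Antitone (stopLoss μ X) := fun a b hab ↦
  integral_mono (integrable_max_sub_zero hX b) (integrable_max_sub_zero hX a) fun _ ↦
    max_le_max_right 0 (sub_le_sub_left hab _)

theorem lipschitzWith_stopLoss (hX : Integrable X μ) :
    LipschitzWith (measureUnivNNReal μ) (stopLoss μ X) := by
  refine LipschitzWith.of_dist_le_mul fun a b ↦ ?_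
  have hbound (ω : Ω) : ‖max (X ω - a) 0 - max (X ω - b) 0‖ ≤ dist a b := by
    simpa only [Real.norm_eq_abs, sub_sub_sub_cancel_left, Real.dist_eq, abs_sub_comm a b]
      using abs_max_sub_max_le_abs (X ω - a) (X ω - b) 0
  rw [dist_eq_norm, stopLoss, stopLoss,
    ← integral_sub (integrable_max_sub_zero hX a) (integrable_max_sub_zero hX b), mul_comm]
  exact norm_integral_le_of_norm_le_const (ae_of_all μ hbound)

end StopLoss

section GammaMeasure

variable {s : ℝ}

theorem uGamma_zero (hs : 0 < s) : uGamma s 0 = Real.Gamma s := by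
  simp only [uGamma, Real.Gamma_eq_integral hs, mul_comm]

theorem measurable_gammaPDF (a r : ℝ) : Measurable (gammaPDF a r) :=
  (measurable_gammaPDFReal a r).ennreal_ofReal

theorem gammaPDFReal_one_mul_rpow {t : ℝ} (ht : 0 < t) (p : ℝ) :
    gammaPDFReal s 1 t * t ^ p = t ^ (s + p - 1) * Real.exp (-t) / Real.Gamma s := by
  rw [gammaPDFReal, if_pos ht.le, Real.one_rpow, one_mul, add_sub_right_comm, Real.rpow_add ht]
  ring

theorem integrable_rpow_gammaMeasure_one {p : ℝ} (hs : 0 < s) (hsp : 0 < s + p) :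
    Integrable (fun t ↦ t ^ p) (gammaMeasure s 1) := by
  rw [gammaMeasure, integrable_withDensity_iff (measurable_gammaPDF s 1)
    (ae_of_all _ fun _ ↦ ENNReal.ofReal_lt_top)]
  simp only [gammaPDF, ENNReal.toReal_ofReal (gammaPDFReal_nonneg hs one_pos _)]
  have hsupp : Function.support (fun t ↦ t ^ p * gammaPDFReal s 1 t) ⊆ Ici 0 := fun t ht ↦ by
    by_contra hneg
    exact ht (by simp only [gammaPDFReal, if_neg (mem_Ici.not.1 hneg), mul_zero])
  rw [← integrableOn_iff_integrable_of_support_subset hsupp, integrableOn_Ici_iff_integrableOn_Ioi]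
  refine IntegrableOn.congr_fun ((Real.GammaIntegral_convergent hsp).div_const (Real.Gamma s))
    (fun t ht ↦ ?_) measurableSet_Ioi
  simp only [mul_comm (t ^ p), gammaPDFReal_one_mul_rpow ht p, mul_comm (Real.exp (-t))]

theorem setIntegral_rpow_gammaMeasure_one (hs : 0 < s) {x : ℝ} (hx : 0 ≤ x) (p : ℝ) :
    ∫ t in Ioi x, t ^ p ∂gammaMeasure s 1 = uGamma (s + p) x / Real.Gamma s := by
  rw [gammaMeasure, setIntegral_withDensity_eq_setIntegral_toReal_smul (measurable_gammaPDF s 1)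
    (ae_of_all _ fun _ ↦ ENNReal.ofReal_lt_top) _ measurableSet_Ioi, uGamma, ← integral_div]
  refine setIntegral_congr_fun measurableSet_Ioi fun t ht ↦ ?_
  simp only [gammaPDF, ENNReal.toReal_ofReal (gammaPDFReal_nonneg hs one_pos t), smul_eq_mul,
    gammaPDFReal_one_mul_rpow (hx.trans_lt ht) p]

theorem integrable_sqrt_gammaMeasure_one (hs : 0 < s) :
    Integrable Real.sqrt (gammaMeasure s 1) := by
  rw [funext Real.sqrt_eq_rpow]
  exact integrable_rpow_gammaMeasure_one hs (by positivity)

theorem lt_mul_sqrt_iff {τ θ t : ℝ} (hτ : 0 < τ) (hθ : 0 ≤ θ) :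
    θ < τ * √t ↔ (θ / τ) ^ 2 < t := by
  rw [← div_lt_iff₀' hτ, Real.lt_sqrt (div_nonneg hθ hτ.le)]

theorem stopLoss_gammaMeasure_one_mul_sqrt (hs : 0 < s) {τ θ : ℝ} (hτ : 0 < τ) (hθ : 0 ≤ θ) :
    stopLoss (gammaMeasure s 1) (fun t ↦ τ * √t) θ =
      (τ * uGamma (s + 1 / 2) ((θ / τ) ^ 2) - θ * uGamma s ((θ / τ) ^ 2)) / Real.Gamma s := by
  have := isProbabilityMeasure_gammaMeasure hs one_pos
  have hsqrt := setIntegral_rpow_gammaMeasure_one hs (sq_nonneg (θ / τ)) (1 / 2)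
  have hmass := setIntegral_rpow_gammaMeasure_one hs (sq_nonneg (θ / τ)) 0
  simp only [← Real.sqrt_eq_rpow] at hsqrt
  simp only [Real.rpow_zero, add_zero] at hmass
  calc stopLoss (gammaMeasure s 1) (fun t ↦ τ * √t) θ
      = ∫ t in Ioi ((θ / τ) ^ 2), (τ * √t - θ * 1) ∂gammaMeasure s 1 := by
        rw [stopLoss_eq_setIntegral (by fun_prop)]
        simp only [lt_mul_sqrt_iff hτ hθ, mul_one, Ioi_def]
    _ = τ * ∫ t in Ioi ((θ / τ) ^ 2), √t ∂gammaMeasure s 1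
          - θ * ∫ t in Ioi ((θ / τ) ^ 2), 1 ∂gammaMeasure s 1 := by
        rw [integral_sub ((integrable_sqrt_gammaMeasure_one hs).integrableOn.const_mul τ)
          ((integrable_const 1).const_mul θ), integral_const_mul, integral_const_mul]
    _ = _ := by rw [hsqrt, hmass]; ring

theorem stopLoss_gammaMeasure_one_mul_sqrt_zero_pos (hs : 0 < s) {τ : ℝ} (hτ : 0 < τ) :
    0 < stopLoss (gammaMeasure s 1) (fun t ↦ τ * √t) 0 := by
  rw [stopLoss_gammaMeasure_one_mul_sqrt hs hτ le_rfl, zero_div, zero_pow two_ne_zero, zero_mul,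
    sub_zero, uGamma_zero (by positivity)]
  positivity

end GammaMeasure

theorem f_exists_unique_pos_root_general
    (s : ℝ) (hs : 0 < s) (τ : ℝ) (hτ : 0 < τ) (c₁ c₂ : ℝ) (hc₁ : 0 < c₁) (hc₂ : 0 < c₂)
    (ξ f : ℝ → ℝ)
    (hξ : ∀ θ, ξ θ = (θ * uGamma s ((θ / τ) ^ 2) - τ * uGamma (s + 1 / 2) ((θ / τ) ^ 2))
      / Real.Gamma s)
    (hf : ∀ θ, f θ = c₁ * ξ θ + c₂ * θ) :
    ∃! θstar : ℝ, 0 < θstar ∧ f θstar = 0 := by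
  have := isProbabilityMeasure_gammaMeasure hs one_pos
  set E := stopLoss (gammaMeasure s 1) (fun t ↦ τ * √t) with hE
  have hint := (integrable_sqrt_gammaMeasure_one hs).const_mul τ
  have hξE {θ : ℝ} (hθ : 0 < θ) : ξ θ = -E θ := by
    rw [hξ, hE, stopLoss_gammaMeasure_one_mul_sqrt hs hτ hθ.le]
    ring
  have hroot_iff {θ : ℝ} (hθ : 0 < θ) : f θ = 0 ↔ c₁ / c₂ * E θ = θ := by
    rw [hf, hξE hθ, div_mul_eq_mul_div, div_eq_iff hc₂.ne']
    constructor <;> intro h <;> linarith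
  have hfix : ∃! θ, 0 < θ ∧ c₁ / c₂ * E θ = θ := existsUnique_pos_fixedPoint_of_antitoneOn
    (((antitone_stopLoss hint).const_mul (by positivity)).antitoneOn _)
    ((lipschitzWith_stopLoss hint).continuous.const_mul _).continuousOn
    (mul_pos (div_pos hc₁ hc₂) (stopLoss_gammaMeasure_one_mul_sqrt_zero_pos hs hτ))
  exact (existsUnique_congr fun _ ↦ and_congr_right hroot_iff).2 hfix

/-- Existence and uniqueness part of Theorem 2 of the paper: for `M ≥ 1`, `τ > 0`,
`c₁, c₂ > 0`, the function `f(θ) = c₁·ξ(θ) + c₂·θ`, with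
`ξ(θ) = (θ·Γ̄(M,(θ/τ)²) − τ·Γ̄(M+1/2,(θ/τ)²)) / Γ(M)`, has a unique positive root. -/
theorem f_exists_unique_pos_root
    (M : ℕ) (hM : 1 ≤ M) (τ : ℝ) (hτ : 0 < τ) (c₁ c₂ : ℝ) (hc₁ : 0 < c₁) (hc₂ : 0 < c₂)
    (ξ f : ℝ → ℝ)
    (hξ : ∀ θ, ξ θ = (θ * uGamma M ((θ / τ) ^ 2) - τ * uGamma (M + 1 / 2) ((θ / τ) ^ 2))
      / Real.Gamma M)
    (hf : ∀ θ, f θ = c₁ * ξ θ + c₂ * θ) :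
    ∃! θstar : ℝ, 0 < θstar ∧ f θstar = 0 :=
  f_exists_unique_pos_root_general M (Nat.cast_pos.2 hM) τ hτ c₁ c₂ hc₁ hc₂ ξ f hξ hf
end

section
/- Let (Ω, F, P) be a probability space and let δ, h, W : Ω → ℝ be mutually independent random variables, where δ takes values in {0, 1} with P(δ = 1) = λ for some λ ∈ (0, 1), h is distributed as the real Gaussian measure with mean 0 and variance γ > 0, and W is distributed as the real Gaussian measure with mean 0 and variance τ² > 0. Set X̃ = δ·h + W. Then, P-almost everywhere, the conditional expectation of δ given the σ-algebra generated by X̃ equals 1 / (1 + ((1−λ)/λ) · √((γ + τ²)/τ²) · exp(−(1/(2τ²) − 1/(2(γ + τ²)))·X̃²)). -/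
open MeasureTheory ProbabilityTheory

/-! On the event `δ = 1` the observation is `h + W ~ N(0, γ + τ²)`, and on its complement it is
`W ~ N(0, τ²)`; both variables are independent of `δ`. Conditioning on an observation turns the
probability of an event into a Radon–Nikodym derivative of laws, here the Bayes quotient
`λ f₁ / (λ f₁ + (1 - λ) f₀)` of the two Gaussian densities. -/

open scoped ENNReal NNReal

section Bayes

variable {Ω E α : Type*} {mΩ : MeasurableSpace Ω} {mE : MeasurableSpace E}
  {mα : MeasurableSpace α} {P : Measure Ω} {ν : Measure E} {f g f₀ f₁ : E → ℝ≥0∞}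
  {X Y Y₀ Y₁ : Ω → E} {A : Set Ω} {δ : Ω → α} {s : Set α}

theorem condProb_comap_ae_eq_rnDeriv_map [IsFiniteMeasure P] (hX : Measurable X)
    (hA : MeasurableSet A) :
    P⟦A | mE.comap X⟧ =ᵐ[P]
      fun ω ↦ (((P.restrict A).map X).rnDeriv (P.map X) (X ω)).toReal := by
  have rnDeriv_ae_eq_indicator :
      (fun ω ↦ ((P.restrict A).rnDeriv P ω).toReal) =ᵐ[P] A.indicator fun _ ↦ (1 : ℝ) := by
    filter_upwards [Measure.rnDeriv_restrict_self P hA] with ω hω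
    by_cases hωA : ω ∈ A <;> simp [hω, hωA]
  exact (condExp_congr_ae rnDeriv_ae_eq_indicator).symm.trans
    (toReal_rnDeriv_map Measure.restrict_le_self.absolutelyContinuous hX).symm

theorem rnDeriv_withDensity_withDensity [SigmaFinite ν] [SigmaFinite (ν.withDensity f)]
    [SigmaFinite (ν.withDensity g)] (hf : AEMeasurable f ν) (hg : AEMeasurable g ν) :
    (ν.withDensity f).rnDeriv (ν.withDensity g) =ᵐ[ν.withDensity g] fun x ↦ f x / g x := by
  have hg_ac := withDensity_absolutelyContinuous ν g
  filter_upwards [Measure.rnDeriv_eq_div (withDensity_absolutelyContinuous ν f) hg_ac,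
    hg_ac.ae_eq (Measure.rnDeriv_withDensity₀ ν hf),
    hg_ac.ae_eq (Measure.rnDeriv_withDensity₀ ν hg)] with x h_div h_num h_den
  rw [h_div, h_num, h_den]

theorem condProb_comap_ae_eq_of_withDensity [IsFiniteMeasure P] [SigmaFinite ν]
    (hX : Measurable X) (hA : MeasurableSet A) (hf₁ : Measurable f₁) (hf₀ : Measurable f₀)
    (h₁ : (P.restrict A).map X = ν.withDensity f₁)
    (h₀ : (P.restrict Aᶜ).map X = ν.withDensity f₀) :
    P⟦A | mE.comap X⟧ =ᵐ[P] fun ω ↦ (f₁ (X ω) / (f₁ (X ω) + f₀ (X ω))).toReal := by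
  have map_eq : P.map X = ν.withDensity (f₁ + f₀) := by
    rw [withDensity_add_left hf₁, ← h₁, ← h₀, ← Measure.map_add _ _ hX,
      Measure.restrict_add_restrict_compl hA]
  have : IsFiniteMeasure (ν.withDensity f₁) := h₁ ▸ inferInstance
  have : IsFiniteMeasure (ν.withDensity (f₁ + f₀)) := map_eq ▸ inferInstance
  have rnDeriv_eq : ((P.restrict A).map X).rnDeriv (P.map X) =ᵐ[P.map X]
      fun x ↦ f₁ x / (f₁ x + f₀ x) := by
    rw [h₁, map_eq]
    exact rnDeriv_withDensity_withDensity hf₁.aemeasurable (hf₁.add hf₀).aemeasurable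
  filter_upwards [condProb_comap_ae_eq_rnDeriv_map hX hA,
    ae_of_ae_map hX.aemeasurable rnDeriv_eq] with ω h_cond h_ratio
  rw [h_cond, h_ratio]

theorem map_restrict_preimage_of_indepFun (hδ : Measurable δ) (hY : AEMeasurable Y P)
    (hδY : IndepFun δ Y P) (hs : MeasurableSet s) :
    (P.restrict (δ ⁻¹' s)).map Y = P (δ ⁻¹' s) • P.map Y := by
  ext B hB
  rw [Measure.map_apply_of_aemeasurable hY.restrict hB, Measure.restrict_apply' (hδ hs),
    Measure.smul_apply, Measure.map_apply_of_aemeasurable hY hB, smul_eq_mul, Set.inter_comm,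
    hδY.measure_inter_preimage_eq_mul _ _ hs hB]

theorem map_restrict_preimage_of_eqOn_of_hasLaw [IsFiniteMeasure P] (hδ : Measurable δ)
    (hs : MeasurableSet s) (hδY : IndepFun δ Y P) (hXY : Set.EqOn X Y (δ ⁻¹' s))
    (hY : HasLaw Y (ν.withDensity f) P) :
    (P.restrict (δ ⁻¹' s)).map X = ν.withDensity (fun x ↦ P (δ ⁻¹' s) * f x) := by
  change _ = ν.withDensity (P (δ ⁻¹' s) • f)
  rw [withDensity_smul' _ _ (measure_ne_top _ _), ← hY.map_eq,
    ← map_restrict_preimage_of_indepFun hδ hY.aemeasurable hδY hs]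
  exact Measure.map_congr (ae_restrict_of_forall_mem (hδ hs) hXY)

theorem condProb_comap_mixture_ae_eq [IsFiniteMeasure P] [SigmaFinite ν]
    (hX : Measurable X) (hδ : Measurable δ) (hs : MeasurableSet s)
    (hf₁ : Measurable f₁) (hf₀ : Measurable f₀)
    (hδY₁ : IndepFun δ Y₁ P) (hδY₀ : IndepFun δ Y₀ P)
    (hXY₁ : Set.EqOn X Y₁ (δ ⁻¹' s)) (hXY₀ : Set.EqOn X Y₀ (δ ⁻¹' sᶜ))
    (hY₁ : HasLaw Y₁ (ν.withDensity f₁) P) (hY₀ : HasLaw Y₀ (ν.withDensity f₀) P) :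
    P⟦δ ⁻¹' s | mE.comap X⟧ =ᵐ[P] fun ω ↦ (P (δ ⁻¹' s) * f₁ (X ω) /
      (P (δ ⁻¹' s) * f₁ (X ω) + P (δ ⁻¹' sᶜ) * f₀ (X ω))).toReal :=
  condProb_comap_ae_eq_of_withDensity (f₁ := fun x ↦ P (δ ⁻¹' s) * f₁ x)
    (f₀ := fun x ↦ P (δ ⁻¹' sᶜ) * f₀ x) hX (hδ hs) (hf₁.const_mul _) (hf₀.const_mul _)
    (map_restrict_preimage_of_eqOn_of_hasLaw hδ hs hδY₁ hXY₁ hY₁)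
    (map_restrict_preimage_of_eqOn_of_hasLaw hδ hs.compl hδY₀ hXY₀ hY₀)

end Bayes

section Gaussian

-- For `v = 0` both sides vanish, because `w / 0 = 0`.
theorem gaussianPDFReal_eq_mul_gaussianPDFReal (m : ℝ) (v : ℝ≥0) {w : ℝ≥0} (hw : w ≠ 0)
    (x : ℝ) :
    gaussianPDFReal m v x = √(w / v) *
      Real.exp (-(1 / (2 * v) - 1 / (2 * w)) * (x - m) ^ 2) * gaussianPDFReal m w x := by
  have sqrt_eq : (√(2 * Real.pi * v))⁻¹ = √(w / v) * (√(2 * Real.pi * w))⁻¹ := by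
    rw [← Real.sqrt_inv, ← Real.sqrt_inv, ← Real.sqrt_mul (by positivity)]
    congr 1
    field_simp
  have exp_eq : Real.exp (-(x - m) ^ 2 / (2 * v)) =
      Real.exp (-(1 / (2 * v) - 1 / (2 * w)) * (x - m) ^ 2) *
        Real.exp (-(x - m) ^ 2 / (2 * w)) := by
    rw [← Real.exp_add]
    ring_nf
  rw [gaussianPDFReal, gaussianPDFReal, sqrt_eq, exp_eq]
  ring

variable {Ω α : Type*} {mΩ : MeasurableSpace Ω} {mα : MeasurableSpace α} {P : Measure Ω}
  {δ : Ω → α} {s : Set α} {X Y₀ Y₁ : Ω → ℝ} {m : ℝ} {v w : ℝ≥0}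

theorem condProb_comap_gaussian_mixture_ae_eq [IsFiniteMeasure P]
    (hX : Measurable X) (hδ : Measurable δ) (hs : MeasurableSet s) (hP : P (δ ⁻¹' s) ≠ 0)
    (hv : v ≠ 0) (hw : w ≠ 0)
    (hδY₁ : IndepFun δ Y₁ P) (hδY₀ : IndepFun δ Y₀ P)
    (hXY₁ : Set.EqOn X Y₁ (δ ⁻¹' s)) (hXY₀ : Set.EqOn X Y₀ (δ ⁻¹' sᶜ))
    (hY₁ : HasLaw Y₁ (gaussianReal m w) P) (hY₀ : HasLaw Y₀ (gaussianReal m v) P) :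
    P⟦δ ⁻¹' s | MeasurableSpace.comap X inferInstance⟧ =ᵐ[P] fun ω ↦
      1 / (1 + P.real (δ ⁻¹' sᶜ) / P.real (δ ⁻¹' s) * √(w / v) *
        Real.exp (-(1 / (2 * v) - 1 / (2 * w)) * (X ω - m) ^ 2)) := by
  rw [gaussianReal_of_var_ne_zero m hw] at hY₁
  rw [gaussianReal_of_var_ne_zero m hv] at hY₀
  filter_upwards [condProb_comap_mixture_ae_eq hX hδ hs (measurable_gaussianPDF m w)
    (measurable_gaussianPDF m v) hδY₁ hδY₀ hXY₁ hXY₀ hY₁ hY₀] with ω h_bayes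
  have prior_ne_zero : P.real (δ ⁻¹' s) ≠ 0 := by simpa [measureReal_eq_zero_iff] using hP
  have density_ne_zero : gaussianPDFReal m w (X ω) ≠ 0 := (gaussianPDFReal_pos m w _ hw).ne'
  rw [h_bayes, ENNReal.toReal_div,
    ENNReal.toReal_add (ENNReal.mul_ne_top (measure_ne_top _ _) gaussianPDF_ne_top)
      (ENNReal.mul_ne_top (measure_ne_top _ _) gaussianPDF_ne_top)]
  simp only [ENNReal.toReal_mul, toReal_gaussianPDF, ← measureReal_def]
  rw [gaussianPDFReal_eq_mul_gaussianPDFReal m v hw]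
  field_simp

end Gaussian

/-- Posterior activity probability of a Bernoulli–Gaussian signal in Gaussian noise:
if `δ ∈ {0,1}` with `P(δ = 1) = λ`, `h ~ N(0, γ)`, `W ~ N(0, τ²)` are mutually
independent and `X̃ = δ·h + W`, then
`E[δ | X̃] = 1/(1 + ((1−λ)/λ)·√((γ+τ²)/τ²)·exp(−(1/(2τ²) − 1/(2(γ+τ²)))·X̃²))` a.e. -/
theorem bernoulli_gaussian_posterior
    {Ω : Type*} [MeasurableSpace Ω] (P : Measure Ω) [IsProbabilityMeasure P]
    (δ h W : Ω → ℝ) (hδm : Measurable δ) (hhm : Measurable h) (hWm : Measurable W)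
    (hindep : iIndepFun ![δ, h, W] P)
    (lam γ τ : ℝ) (hlam : lam ∈ Set.Ioo (0 : ℝ) 1) (hγ : 0 < γ) (hτ : 0 < τ)
    (hδval : ∀ ω, δ ω = 0 ∨ δ ω = 1)
    (hδlaw : (P {ω | δ ω = 1}).toReal = lam)
    (hhlaw : Measure.map h P = gaussianReal 0 γ.toNNReal)
    (hWlaw : Measure.map W P = gaussianReal 0 (τ ^ 2).toNNReal) :
    P[δ | MeasurableSpace.comap (fun ω => δ ω * h ω + W ω) inferInstance]
      =ᵐ[P] fun ω => 1 / (1 + (1 - lam) / lam * Real.sqrt ((γ + τ ^ 2) / τ ^ 2)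
        * Real.exp (-(1 / (2 * τ ^ 2) - 1 / (2 * (γ + τ ^ 2)))
          * (δ ω * h ω + W ω) ^ 2)) := by
  have hX : Measurable fun ω ↦ δ ω * h ω + W ω := by fun_prop
  have h_all : ∀ i, Measurable (![δ, h, W] i) := by
    intro i; fin_cases i <;> assumption
  have hδ_sum : IndepFun δ (h + W) P :=
    hindep.indepFun_add_right h_all 0 1 2 (by decide) (by decide)
  have hδW : IndepFun δ W P := hindep.indepFun (i := 0) (j := 2) (by decide)
  have hhW : IndepFun h W P := hindep.indepFun (i := 1) (j := 2) (by decide)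
  have hsum : HasLaw (h + W) (gaussianReal 0 (γ.toNNReal + (τ ^ 2).toNNReal)) P :=
    ⟨by fun_prop, by simpa using gaussianReal_add_gaussianReal_of_indepFun hhW hhlaw hWlaw⟩
  have hprior : P.real (δ ⁻¹' {1}) = lam := hδlaw
  have hδ_indicator : (δ ⁻¹' {1}).indicator (fun _ ↦ (1 : ℝ)) = δ := by
    ext ω; rcases hδval ω with hω | hω <;> simp [hω]
  have hτv : (τ ^ 2).toNNReal ≠ 0 := by simpa using hτ.ne'
  have h_post := condProb_comap_gaussian_mixture_ae_eq (s := {1}) hX hδm (measurableSet_singleton 1)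
    (fun h_zero ↦ hlam.1.ne' (by simp [← hprior, measureReal_def, h_zero]))
    hτv (by simp [hτv]) hδ_sum hδW (fun ω hω ↦ by simp [show δ ω = 1 from hω])
    (fun ω hω ↦ by simp [(hδval ω).resolve_right hω]) hsum ⟨hWm.aemeasurable, hWlaw⟩
  rw [hδ_indicator, Set.preimage_compl, probReal_compl_eq_one_sub (hδm (measurableSet_singleton 1)),
    hprior] at h_post
  simpa [hγ.le, sq_nonneg] using h_post
end

section
/- Let (Ω, F, P) be a probability space. Let δ₁, δ₂ : Ω → {0, 1} and h₁, h₂, W₁, W₂ : Ω → ℝ be random variables such that: the pair (δ₁, δ₂) is independent of the quadruple (h₁, h₂, W₁, W₂); h₁, h₂, W₁, W₂ are mutually independent with h₁ and h₂ distributed as the real Gaussian measure N(0, γ) with γ > 0, W₁ distributed as N(0, s₁²) and W₂ distributed as N(0, s₂²) with s₁, s₂ > 0; and P(δ₁ = 1) = λ ∈ (0, 1), P(δ₂ = 1 and δ₁ = 1) = α·λ, P(δ₂ = 1 and δ₁ = 0) = β·(1−λ), with α, β ∈ [0, 1]. Then the law of the ℝ²-valued random variable (δ₂·h₂ + W₂,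 δ₁·h₁ + W₁) equals the mixture measure α·λ·(N(0, γ + s₂²) ⊗ N(0, γ + s₁²)) + (1−α)·λ·(N(0, s₂²) ⊗ N(0, γ + s₁²)) + β·(1−λ)·(N(0, γ + s₂²) ⊗ N(0, s₁²)) + (1−β)·(1−λ)·(N(0, s₂²) ⊗ N(0, s₁²)), where ⊗ denotes the product of measures. -/
open MeasureTheory ProbabilityTheory

/-!
Conditionally on the activities `(δ₁, δ₂) = (a, b)`, independence leaves the law of the noises and
fading coefficients unchanged, so the observations `b * h₂ + W₂` and `a * h₁ + W₁` are independent
centred Gaussians with variances `b² γ + s₂²` and `a² γ + s₁²`. Averaging over the four values of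
`(a, b)` gives the mixture, whose weights follow from the given probabilities by complementation.
-/

section DiscreteMixture

variable {Ω E F G : Type*} [MeasurableSpace Ω] [MeasurableSpace E] [MeasurableSpace F]
  [MeasurableSpace G] {μ : Measure Ω}

lemma map_eq_sum_smul_map_of_indepFun [MeasurableSingletonClass E] [IsFiniteMeasure μ]
    {X : Ω → E} {Y : Ω → F} {f : E × F → G} {S : Finset E} (hXY : IndepFun X Y μ)
    (hX : AEMeasurable X μ) (hY : AEMeasurable Y μ) (hf : Measurable f)
    (hS : ∀ᵐ ω ∂μ, X ω ∈ S) :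
    μ.map (fun ω => f (X ω, Y ω)) =
      ∑ x ∈ S, μ (X ⁻¹' {x}) • μ.map (fun ω => f (x, Y ω)) := by
  have hslice (x : E) : ((Measure.dirac x).prod (μ.map Y)).map f =
      μ.map (fun ω => f (x, Y ω)) := by
    rw [Measure.dirac_prod, Measure.map_map hf measurable_prodMk_left,
      AEMeasurable.map_map_of_aemeasurable (by fun_prop) hY]
    rfl
  calc
    μ.map (fun ω => f (X ω, Y ω)) = (μ.map (fun ω => (X ω, Y ω))).map f :=
      (AEMeasurable.map_map_of_aemeasurable hf.aemeasurable (hX.prodMk hY)).symm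
    _ = ((∑ x ∈ S, μ (X ⁻¹' {x}) • Measure.dirac x).prod (μ.map Y)).map f := by
      rw [hXY.map_prod_eq_prod_map_map hX hY,
        (Measure.ae_mem_finset_iff_map_eq_sum_dirac hX).1 hS]
    _ = ∑ x ∈ S, μ (X ⁻¹' {x}) • ((Measure.dirac x).prod (μ.map Y)).map f := by
      rw [← Measure.sum_coe_finset, Measure.prod_sum_left, Measure.sum_coe_finset S
        (fun x => (μ (X ⁻¹' {x}) • Measure.dirac x).prod (μ.map Y)),
        Measure.map_finset_sum hf.aemeasurable]
      simp only [Measure.prod_smul_left, Measure.map_smul]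
    _ = ∑ x ∈ S, μ (X ⁻¹' {x}) • μ.map (fun ω => f (x, Y ω)) := by simp only [hslice]

lemma measure_eq_and_eq_ofReal_one_sub_mul [MeasurableSingletonClass E] {X : Ω → E} {x y : E}
    {p : Ω → Prop} {q r : ℝ} (hX : AEMeasurable X μ) (hxy : x ≠ y)
    (hXxy : ∀ ω, X ω = x ∨ X ω = y) (hqr : 0 ≤ q * r) (hp : μ {ω | p ω} = ENNReal.ofReal r)
    (hy : μ {ω | X ω = y ∧ p ω} = ENNReal.ofReal (q * r)) :
    μ {ω | X ω = x ∧ p ω} = ENNReal.ofReal ((1 - q) * r) := by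
  have hsplit : μ {ω | X ω = y ∧ p ω} + μ {ω | X ω = x ∧ p ω} = μ {ω | p ω} := by
    rw [← measure_inter_add_sdiff₀ {ω | p ω} (hX.nullMeasurableSet_preimage (.singleton y))]
    congr 2 <;> ext ω <;> rcases hXxy ω with h | h <;> simp [h, hxy, hxy.symm]
  rw [ENNReal.eq_sub_of_add_eq' (by simp [hp]) ((add_comm _ _).trans hsplit), hp, hy,
    ← ENNReal.ofReal_sub r hqr]
  congr 1
  ring

end DiscreteMixture

section GaussianChannel

variable {Ω : Type*} [MeasurableSpace Ω] {P : Measure Ω}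

lemma hasLaw_const_mul_add_gaussianReal {X Y : Ω → ℝ} {m n : ℝ} {v w : NNReal}
    (hXY : IndepFun X Y P) (hX : HasLaw X (gaussianReal m v) P)
    (hY : HasLaw Y (gaussianReal n w) P) (c : ℝ) :
    HasLaw (fun ω => c * X ω + Y ω)
      (gaussianReal (c * m + n) (.mk (c ^ 2) (sq_nonneg c) * v + w)) P := by
  rw [← gaussianReal_conv_gaussianReal]
  exact (hXY.comp (measurable_const_mul c) measurable_id).hasLaw_fun_add
    (gaussianReal_const_mul hX c) hY

variable {h₁ h₂ W₁ W₂ : Ω → ℝ} {m₁ m₂ n₁ n₂ : ℝ} {v₁ v₂ w₁ w₂ : NNReal}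

lemma hasLaw_prodMk_const_mul_add_gaussianReal (hind : iIndepFun ![h₁, h₂, W₁, W₂] P)
    (hh₁ : HasLaw h₁ (gaussianReal m₁ v₁) P) (hh₂ : HasLaw h₂ (gaussianReal m₂ v₂) P)
    (hW₁ : HasLaw W₁ (gaussianReal n₁ w₁) P) (hW₂ : HasLaw W₂ (gaussianReal n₂ w₂) P)
    (a b : ℝ) :
    HasLaw (fun ω => (b * h₂ ω + W₂ ω, a * h₁ ω + W₁ ω))
      ((gaussianReal (b * m₂ + n₂) (.mk (b ^ 2) (sq_nonneg b) * v₂ + w₂)).prod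
        (gaussianReal (a * m₁ + n₁) (.mk (a ^ 2) (sq_nonneg a) * v₁ + w₁))) P := by
  have : IsProbabilityMeasure P := hh₁.isProbabilityMeasure
  have hmeas : ∀ i, AEMeasurable (![h₁, h₂, W₁, W₂] i) P :=
    Fin.forall_fin_succ.2 ⟨hh₁.aemeasurable, Fin.forall_fin_succ.2 ⟨hh₂.aemeasurable,
      Fin.forall_fin_two.2 ⟨hW₁.aemeasurable, hW₂.aemeasurable⟩⟩⟩
  have hblocks : IndepFun (fun ω => (h₂ ω, W₂ ω)) (fun ω => (h₁ ω, W₁ ω)) P :=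
    hind.indepFun_prodMk_prodMk₀ hmeas 1 3 0 2 (by decide) (by decide) (by decide) (by decide)
  have hindep₁ : IndepFun h₁ W₁ P := hind.indepFun (i := 0) (j := 2) (by decide)
  have hindep₂ : IndepFun h₂ W₂ P := hind.indepFun (i := 1) (j := 3) (by decide)
  have hobs : IndepFun (fun ω => b * h₂ ω + W₂ ω) (fun ω => a * h₁ ω + W₁ ω) P :=
    hblocks.comp (φ := fun p : ℝ × ℝ => b * p.1 + p.2) (ψ := fun p : ℝ × ℝ => a * p.1 + p.2)
      (by fun_prop) (by fun_prop)
  exact hobs.hasLaw_prod (hasLaw_const_mul_add_gaussianReal hindep₂ hh₂ hW₂ b)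
    (hasLaw_const_mul_add_gaussianReal hindep₁ hh₁ hW₁ a)

lemma map_prodMk_mul_add_eq_sum_smul_gaussianReal_prod {δ₁ δ₂ : Ω → ℝ} {S : Finset (ℝ × ℝ)}
    (hδ : AEMeasurable (fun ω => (δ₁ ω, δ₂ ω)) P) (hS : ∀ᵐ ω ∂P, (δ₁ ω, δ₂ ω) ∈ S)
    (hindep : IndepFun (fun ω => (δ₁ ω, δ₂ ω)) (fun ω => (h₁ ω, h₂ ω, W₁ ω, W₂ ω)) P)
    (hind : iIndepFun ![h₁, h₂, W₁, W₂] P)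
    (hh₁ : HasLaw h₁ (gaussianReal m₁ v₁) P) (hh₂ : HasLaw h₂ (gaussianReal m₂ v₂) P)
    (hW₁ : HasLaw W₁ (gaussianReal n₁ w₁) P) (hW₂ : HasLaw W₂ (gaussianReal n₂ w₂) P) :
    P.map (fun ω => (δ₂ ω * h₂ ω + W₂ ω, δ₁ ω * h₁ ω + W₁ ω)) =
      ∑ d ∈ S, P {ω | δ₂ ω = d.2 ∧ δ₁ ω = d.1} •
        ((gaussianReal (d.2 * m₂ + n₂) (.mk (d.2 ^ 2) (sq_nonneg d.2) * v₂ + w₂)).prod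
          (gaussianReal (d.1 * m₁ + n₁) (.mk (d.1 ^ 2) (sq_nonneg d.1) * v₁ + w₁))) := by
  have : IsProbabilityMeasure P := hh₁.isProbabilityMeasure
  let observe (x : (ℝ × ℝ) × ℝ × ℝ × ℝ × ℝ) : ℝ × ℝ :=
    (x.1.2 * x.2.2.1 + x.2.2.2.2, x.1.1 * x.2.1 + x.2.2.2.1)
  have hobserve : Measurable observe := by fun_prop
  have hquad : AEMeasurable (fun ω => (h₁ ω, h₂ ω, W₁ ω, W₂ ω)) P :=
    hh₁.aemeasurable.prodMk (hh₂.aemeasurable.prodMk (hW₁.aemeasurable.prodMk hW₂.aemeasurable))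
  refine (map_eq_sum_smul_map_of_indepFun hindep hδ hquad hobserve hS).trans
    (Finset.sum_congr rfl fun d _ => ?_)
  have hfiber : (fun ω => (δ₁ ω, δ₂ ω)) ⁻¹' {d} = {ω | δ₂ ω = d.2 ∧ δ₁ ω = d.1} := by
    ext ω
    simp [Prod.ext_iff, and_comm]
  rw [hfiber, ← (hasLaw_prodMk_const_mul_add_gaussianReal hind hh₁ hh₂ hW₁ hW₂ d.1 d.2).map_eq]

end GaussianChannel

/-- Scalar form of the joint-density computation in Appendix C of the paper: under the
temporally correlated Bernoulli–Gaussian model, the pair of noisy pseudo-observations over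
two consecutive coherence blocks is a four-component Gaussian mixture with weights
`αλ, (1−α)λ, β(1−λ), (1−β)(1−λ)`. -/
theorem joint_law_gaussian_mixture
    {Ω : Type*} [MeasurableSpace Ω] (P : Measure Ω) [IsProbabilityMeasure P]
    (δ₁ δ₂ h₁ h₂ W₁ W₂ : Ω → ℝ)
    (hδ₁m : Measurable δ₁) (hδ₂m : Measurable δ₂) (hh₁m : Measurable h₁)
    (hh₂m : Measurable h₂) (hW₁m : Measurable W₁) (hW₂m : Measurable W₂)
    (γ s₁ s₂ lam alp bet : ℝ) (hγ : 0 < γ) (hs₁ : 0 < s₁) (hs₂ : 0 < s₂)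
    (hlam : lam ∈ Set.Ioo (0 : ℝ) 1) (halp : alp ∈ Set.Icc (0 : ℝ) 1)
    (hbet : bet ∈ Set.Icc (0 : ℝ) 1)
    (hindep : IndepFun (fun ω => (δ₁ ω, δ₂ ω)) (fun ω => (h₁ ω, h₂ ω, W₁ ω, W₂ ω)) P)
    (hiid : iIndepFun ![h₁, h₂, W₁, W₂] P)
    (hh₁law : Measure.map h₁ P = gaussianReal 0 γ.toNNReal)
    (hh₂law : Measure.map h₂ P = gaussianReal 0 γ.toNNReal)
    (hW₁law : Measure.map W₁ P = gaussianReal 0 (s₁ ^ 2).toNNReal)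
    (hW₂law : Measure.map W₂ P = gaussianReal 0 (s₂ ^ 2).toNNReal)
    (hδ₁val : ∀ ω, δ₁ ω = 0 ∨ δ₁ ω = 1) (hδ₂val : ∀ ω, δ₂ ω = 0 ∨ δ₂ ω = 1)
    (hδ₁law : P {ω | δ₁ ω = 1} = ENNReal.ofReal lam)
    (hδ₂₁law : P {ω | δ₂ ω = 1 ∧ δ₁ ω = 1} = ENNReal.ofReal (alp * lam))
    (hδ₂₀law : P {ω | δ₂ ω = 1 ∧ δ₁ ω = 0} = ENNReal.ofReal (bet * (1 - lam))) :
    Measure.map (fun ω => (δ₂ ω * h₂ ω + W₂ ω, δ₁ ω * h₁ ω + W₁ ω)) P =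
      ENNReal.ofReal (alp * lam) •
        ((gaussianReal 0 (γ + s₂ ^ 2).toNNReal).prod (gaussianReal 0 (γ + s₁ ^ 2).toNNReal))
      + ENNReal.ofReal ((1 - alp) * lam) •
        ((gaussianReal 0 (s₂ ^ 2).toNNReal).prod (gaussianReal 0 (γ + s₁ ^ 2).toNNReal))
      + ENNReal.ofReal (bet * (1 - lam)) •
        ((gaussianReal 0 (γ + s₂ ^ 2).toNNReal).prod (gaussianReal 0 (s₁ ^ 2).toNNReal))
      + ENNReal.ofReal ((1 - bet) * (1 - lam)) •
        ((gaussianReal 0 (s₂ ^ 2).toNNReal).prod (gaussianReal 0 (s₁ ^ 2).toNNReal)) := by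
  obtain ⟨hlam0, hlam1⟩ := hlam
  have hactive : 0 ≤ alp * lam := mul_nonneg halp.1 hlam0.le
  have hinactive : 0 ≤ bet * (1 - lam) := mul_nonneg hbet.1 (sub_nonneg.2 hlam1.le)
  have hδ₁₀law : P {ω | δ₁ ω = 0} = ENNReal.ofReal (1 - lam) := by
    simpa using measure_eq_and_eq_ofReal_one_sub_mul (p := fun _ => True) (q := lam) (r := 1)
      hδ₁m.aemeasurable zero_ne_one hδ₁val (by simpa using hlam0.le) (by simp)
      (by simpa using hδ₁law)
  have hδ₀₁law := measure_eq_and_eq_ofReal_one_sub_mul hδ₂m.aemeasurable zero_ne_one hδ₂val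
    hactive hδ₁law hδ₂₁law
  have hδ₀₀law := measure_eq_and_eq_ofReal_one_sub_mul hδ₂m.aemeasurable zero_ne_one hδ₂val
    hinactive hδ₁₀law hδ₂₀law
  have hmem (ω : Ω) : (δ₁ ω, δ₂ ω) ∈ ({1, 0} ×ˢ {1, 0} : Finset (ℝ × ℝ)) := by
    simpa using ⟨(hδ₁val ω).symm, (hδ₂val ω).symm⟩
  rw [map_prodMk_mul_add_eq_sum_smul_gaussianReal_prod (hδ₁m.prodMk hδ₂m).aemeasurable
    (.of_forall hmem) hindep hiid ⟨hh₁m.aemeasurable, hh₁law⟩ ⟨hh₂m.aemeasurable, hh₂law⟩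
    ⟨hW₁m.aemeasurable, hW₁law⟩ ⟨hW₂m.aemeasurable, hW₂law⟩, Finset.sum_product,
    Finset.sum_pair one_ne_zero, Finset.sum_pair one_ne_zero, Finset.sum_pair one_ne_zero]
  simp [hδ₂₁law, hδ₂₀law, hδ₀₁law, hδ₀₀law, Real.toNNReal_add hγ.le (sq_nonneg _), add_assoc]
end
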